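/- arXiv:1310.4528 — 2 statements merged into one kernel-verified Lean document; each statement's English description precedes it below -/
import Mathlib

section
/- Let f be a monostable nonlinearity and w the associated heteroclinic, and let μ > 0. Then the problem p''(t) − μ p(t) + f'(w(t)) p(t) = −w'(t) on (0,∞) with p(0) = 0 has a unique bounded solution p; moreover p(t) > 0 for all t > 0, and p'(0) > 0. -/
open Set Filter

/-- A monostable nonlinearity: smooth, `f 0 = f 1 = 0`, positive on `(0,1)`, `f' 1 < 0`. -/
def Monostable (f : ℝ → ℝ) : Prop :=
  ContDiff ℝ (⊤ : ℕ∞) f ∧ f 0 = 0 ∧ f 1 = 0 ∧ (∀ s ∈ Set.Ioo (0 : ℝ) 1, 0 < f s) ∧ deriv f 1 < 0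

/-- The heteroclinic associated with `f`. -/
def IsHeteroclinic (f w : ℝ → ℝ) : Prop :=
  ContDiffOn ℝ 2 w (Set.Ici 0) ∧
  (∀ t ∈ Set.Ioi (0 : ℝ),
    derivWithin (derivWithin w (Set.Ici 0)) (Set.Ici 0) t + f (w t) = 0) ∧
  w 0 = 0 ∧
  Filter.Tendsto w Filter.atTop (nhds 1) ∧
  (∀ t ∈ Set.Ioi (0 : ℝ), 0 < w t) ∧
  StrictMonoOn w (Set.Ici 0) ∧
  (∀ t ∈ Set.Ici (0 : ℝ), 0 < derivWithin w (Set.Ici 0) t)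

/-- `p` is a bounded `C²` solution of `p'' - μ p + f'(w(t)) p = -w'(t)` on `(0,∞)`
with `p(0) = 0`. -/
def IsBddSolMu (f w : ℝ → ℝ) (μ : ℝ) (p : ℝ → ℝ) : Prop :=
  ContDiffOn ℝ 2 p (Set.Ici 0) ∧
  (∀ t ∈ Set.Ioi (0 : ℝ),
    derivWithin (derivWithin p (Set.Ici 0)) (Set.Ici 0) t - μ * p t + deriv f (w t) * p t
      = -(derivWithin w (Set.Ici 0) t)) ∧
  p 0 = 0 ∧
  (∃ M : ℝ, ∀ t ∈ Set.Ici (0 : ℝ), |p t| ≤ M)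

/-!
Differentiating `w'' + f(w) = 0` shows that `φ = w' > 0` solves `φ'' = (q - μ) φ` with
`q = μ - f'(w)`, while the equation for `p` reads `p'' = q p - φ`. Hence `p = (φ - φ(0) h) / μ` for
a solution `h` of the homogeneous equation `h'' = q h` with `h(0) = 1`, and everything rests on
comparing solutions `u` of `u'' = q u` with `φ`. Their Wronskian `W = u' φ - u φ'` satisfies
`(u / φ)' = W / φ²` and `W' = μ u φ`, so that `(u / φ) W` is nondecreasing.

If `(h / φ) W` is negative throughout, then `(h / φ)²` decreases strictly from `1 / φ(0)²`, so
`|φ(0) h| < φ` on `(0, ∞)`: thus `p` is positive and bounded by `2 φ / μ`, and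
`p'(0) = -W(0) / μ > 0`. Such an `h` is found by shooting in the initial slope, as a point of a
nested intersection of compact intervals. Conversely, the solution with data `u(0) = 0`, `u'(0) = 1`
is unbounded because its Wronskian is at least `φ(0)`, and the difference of two solutions for `p`
is a multiple of it.
-/

open scoped NNReal BoundedContinuousFunction

section LinearODE

variable {E : Type*} [NormedAddCommGroup E] [NormedSpace ℝ E] {A : ℝ → E →L[ℝ] E}

/-- Bielecki's exponential weight for the linear equation `X' = A X`: in the supremum norm divided
by this weight, the Picard operator contracts on the whole half-line. -/
noncomputable def bieleckiWeight (A : ℝ → E →L[ℝ] E) (t : ℝ) : ℝ :=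
  Real.exp (2 * ∫ s in (0 : ℝ)..t, ‖A s‖)

lemma bieleckiWeight_pos (A : ℝ → E →L[ℝ] E) (t : ℝ) : 0 < bieleckiWeight A t :=
  Real.exp_pos _

@[simp]
lemma bieleckiWeight_zero (A : ℝ → E →L[ℝ] E) : bieleckiWeight A 0 = 1 := by
  simp [bieleckiWeight]

lemma one_le_bieleckiWeight (A : ℝ → E →L[ℝ] E) {t : ℝ} (ht : 0 ≤ t) :
    1 ≤ bieleckiWeight A t :=
  Real.one_le_exp <| mul_nonneg zero_le_two <|
    intervalIntegral.integral_nonneg ht fun _ _ => norm_nonneg _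

lemma hasDerivAt_bieleckiWeight (hA : Continuous A) (t : ℝ) :
    HasDerivAt (bieleckiWeight A) (2 * ‖A t‖ * bieleckiWeight A t) t :=
  (((hA.norm.integral_hasStrictDerivAt 0 t).hasDerivAt.const_mul 2).exp).congr_deriv
    (mul_comm _ _)

lemma continuous_bieleckiWeight (hA : Continuous A) : Continuous (bieleckiWeight A) :=
  continuous_iff_continuousAt.2 fun t => (hasDerivAt_bieleckiWeight hA t).continuousAt

lemma integral_norm_mul_bieleckiWeight (hA : Continuous A) (t : ℝ) :
    ∫ s in (0 : ℝ)..t, 2 * ‖A s‖ * bieleckiWeight A s = bieleckiWeight A t - 1 := by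
  rw [intervalIntegral.integral_eq_sub_of_hasDerivAt
    (fun s _ => hasDerivAt_bieleckiWeight hA s), bieleckiWeight_zero]
  exact ((continuous_const.mul hA.norm).mul
    (continuous_bieleckiWeight hA)).intervalIntegrable _ _

lemma norm_inv_bieleckiWeight_smul_integral_le (hA : Continuous A) {Z : ℝ → E} {C : ℝ}
    (hZ : ∀ s, ‖Z s‖ ≤ C) {t : ℝ} (ht : 0 ≤ t) :
    ‖(bieleckiWeight A t)⁻¹ • ∫ s in (0 : ℝ)..t, bieleckiWeight A s • A s (Z s)‖ ≤ C / 2 := by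
  have hC : 0 ≤ C := (norm_nonneg _).trans (hZ 0)
  have hpos := bieleckiWeight_pos A
  have hintegrand (s : ℝ) : ‖bieleckiWeight A s • A s (Z s)‖
      ≤ C / 2 * (2 * ‖A s‖ * bieleckiWeight A s) := by
    rw [norm_smul, Real.norm_of_nonneg (hpos s).le]
    calc bieleckiWeight A s * ‖A s (Z s)‖
        ≤ bieleckiWeight A s * (‖A s‖ * C) :=
          mul_le_mul_of_nonneg_left ((A s).le_opNorm_of_le (hZ s)) (hpos s).le
      _ = C / 2 * (2 * ‖A s‖ * bieleckiWeight A s) := by ring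
  rw [norm_smul, norm_inv, Real.norm_of_nonneg (hpos t).le, inv_mul_le_iff₀ (hpos t)]
  calc ‖∫ s in (0 : ℝ)..t, bieleckiWeight A s • A s (Z s)‖
      ≤ ∫ s in (0 : ℝ)..t, C / 2 * (2 * ‖A s‖ * bieleckiWeight A s) :=
        intervalIntegral.norm_integral_le_of_norm_le ht
          (Eventually.of_forall fun s _ => hintegrand s)
          ((continuous_const.mul ((continuous_const.mul hA.norm).mul
            (continuous_bieleckiWeight hA))).intervalIntegrable _ _)
    _ = C / 2 * (bieleckiWeight A t - 1) := by
        rw [intervalIntegral.integral_const_mul, integral_norm_mul_bieleckiWeight hA]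
    _ ≤ bieleckiWeight A t * (C / 2) := by linarith

lemma continuous_bieleckiWeight_smul (hA : Continuous A) (Y : ℝ≥0 →ᵇ E) :
    Continuous fun s => bieleckiWeight A s • A s (Y s.toNNReal) :=
  (continuous_bieleckiWeight hA).smul
    (hA.clm_apply (Y.continuous.comp continuous_real_toNNReal))

/-- The Picard operator of `X' = A X`, `X 0 = x₀`, conjugated by `bieleckiWeight`: a fixed point `Y`
corresponds to the solution `X = bieleckiWeight A • Y`. -/
noncomputable def weightedPicard (hA : Continuous A) (x₀ : E) (Y : ℝ≥0 →ᵇ E) : ℝ≥0 →ᵇ E :=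
  .ofNormedAddCommGroup
    (fun t => (bieleckiWeight A t)⁻¹ •
      (x₀ + ∫ s in (0 : ℝ)..t, bieleckiWeight A s • A s (Y s.toNNReal)))
    (by
      have hprim : Continuous fun t : ℝ =>
          ∫ s in (0 : ℝ)..t, bieleckiWeight A s • A s (Y s.toNNReal) :=
        intervalIntegral.continuous_primitive
          (fun a b => (continuous_bieleckiWeight_smul hA Y).intervalIntegrable a b) 0
      exact (((continuous_bieleckiWeight hA).comp NNReal.continuous_coe).inv₀
        fun t => (bieleckiWeight_pos A t).ne').smul
          (continuous_const.add (hprim.comp NNReal.continuous_coe)))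
    (‖x₀‖ + ‖Y‖ / 2)
    (fun t => by
      rw [smul_add]
      refine (norm_add_le _ _).trans (add_le_add ?_ <|
        norm_inv_bieleckiWeight_smul_integral_le hA (fun s => Y.norm_coe_le_norm _) t.2)
      rw [norm_smul, norm_inv, Real.norm_of_nonneg (bieleckiWeight_pos A t).le]
      exact mul_le_of_le_one_left (norm_nonneg _)
        (inv_le_one_of_one_le₀ (one_le_bieleckiWeight A t.2)))

lemma contractingWith_weightedPicard (hA : Continuous A) (x₀ : E) :
    ContractingWith (1 / 2) (weightedPicard hA x₀) := by
  refine ⟨by norm_num, LipschitzWith.of_dist_le_mul fun Y Z => ?_⟩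
  rw [BoundedContinuousFunction.dist_le (by positivity)]
  intro t
  have hdiff : weightedPicard hA x₀ Y t - weightedPicard hA x₀ Z t = (bieleckiWeight A t)⁻¹ •
      ∫ s in (0 : ℝ)..t, bieleckiWeight A s • A s (Y s.toNNReal - Z s.toNNReal) := by
    simp only [weightedPicard, BoundedContinuousFunction.coe_ofNormedAddCommGroup, map_sub,
      smul_sub]
    rw [intervalIntegral.integral_sub
      ((continuous_bieleckiWeight_smul hA Y).intervalIntegrable _ _)
      ((continuous_bieleckiWeight_smul hA Z).intervalIntegrable _ _),
      ← smul_sub, add_sub_add_left_eq_sub]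
  rw [dist_eq_norm, hdiff]
  refine (norm_inv_bieleckiWeight_smul_integral_le hA (C := dist Y Z) (fun s => ?_) t.2).trans_eq ?_
  · rw [← dist_eq_norm]
    exact BoundedContinuousFunction.dist_coe_le_dist _
  · push_cast
    ring

theorem exists_forall_hasDerivAt_linear [CompleteSpace E] (hA : Continuous A) (x₀ : E) :
    ∃ X : ℝ → E, X 0 = x₀ ∧ ∀ t, 0 ≤ t → HasDerivAt X (A t (X t)) t := by
  have hT := contractingWith_weightedPicard hA x₀
  set Y := ContractingWith.fixedPoint _ hT
  have hfix : weightedPicard hA x₀ Y = Y := hT.fixedPoint_isFixedPt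
  set X : ℝ → E := fun t => x₀ + ∫ s in (0 : ℝ)..t, bieleckiWeight A s • A s (Y s.toNNReal)
  have hXY (t : ℝ) (ht : 0 ≤ t) : bieleckiWeight A t • Y t.toNNReal = X t := by
    have hYt : Y t.toNNReal = (bieleckiWeight A t)⁻¹ • X t := by
      conv_lhs => rw [← hfix]
      simp only [weightedPicard, BoundedContinuousFunction.coe_ofNormedAddCommGroup,
        Real.coe_toNNReal t ht, X]
    rw [hYt, smul_inv_smul₀ (bieleckiWeight_pos A t).ne']
  refine ⟨X, by simp [X], fun t ht => ?_⟩
  rw [← hXY t ht, map_smul]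
  exact (((continuous_bieleckiWeight_smul hA Y).integral_hasStrictDerivAt 0 t).hasDerivAt).const_add
    x₀

end LinearODE

section Monotonicity

variable {D : Set ℝ} {F F' : ℝ → ℝ}

lemma monotoneOn_of_forall_hasDerivWithinAt_nonneg (hD : Convex ℝ D)
    (hF : ∀ t ∈ D, HasDerivWithinAt F (F' t) D t) (hF' : ∀ t ∈ D, 0 ≤ F' t) : MonotoneOn F D :=
  monotoneOn_of_hasDerivWithinAt_nonneg hD (fun t ht => (hF t ht).continuousWithinAt)
    (fun t ht => (hF t (interior_subset ht)).mono interior_subset)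
    (fun t ht => hF' t (interior_subset ht))

lemma strictMonoOn_of_forall_hasDerivWithinAt_pos (hD : Convex ℝ D)
    (hF : ∀ t ∈ D, HasDerivWithinAt F (F' t) D t) (hF' : ∀ t ∈ D, 0 < F' t) : StrictMonoOn F D :=
  strictMonoOn_of_hasDerivWithinAt_pos hD (fun t ht => (hF t ht).continuousWithinAt)
    (fun t ht => (hF t (interior_subset ht)).mono interior_subset)
    (fun t ht => hF' t (interior_subset ht))

end Monotonicity

/-- `u' = v` and `u'' = g` on `[0, ∞)`, with one-sided derivatives at `0`. The first derivative is a
parameter, so that Wronskians and initial slopes can be written without `derivWithin`. -/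
def HasSecondDeriv (u v g : ℝ → ℝ) : Prop :=
  ∀ t ∈ Ici (0 : ℝ),
    HasDerivWithinAt u (v t) (Ici 0) t ∧ HasDerivWithinAt v (g t) (Ici 0) t

namespace HasSecondDeriv

variable {u v g φ ψ k : ℝ → ℝ}

lemma continuousOn (hu : HasSecondDeriv u v g) : ContinuousOn u (Ici 0) :=
  fun t ht => (hu t ht).1.continuousWithinAt

lemma sub (hu : HasSecondDeriv u v g) (hφ : HasSecondDeriv φ ψ k) :
    HasSecondDeriv (u - φ) (v - ψ) (g - k) :=
  fun t ht => ⟨(hu t ht).1.sub (hφ t ht).1, (hu t ht).2.sub (hφ t ht).2⟩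

lemma add (hu : HasSecondDeriv u v g) (hφ : HasSecondDeriv φ ψ k) :
    HasSecondDeriv (u + φ) (v + ψ) (g + k) :=
  fun t ht => ⟨(hu t ht).1.add (hφ t ht).1, (hu t ht).2.add (hφ t ht).2⟩

lemma const_smul (hu : HasSecondDeriv u v g) (c : ℝ) :
    HasSecondDeriv (c • u) (c • v) (c • g) :=
  fun t ht => ⟨(hu t ht).1.const_smul c, (hu t ht).2.const_smul c⟩

lemma congr_right (hu : HasSecondDeriv u v g) (hgk : EqOn g k (Ici 0)) : HasSecondDeriv u v k :=
  fun t ht => ⟨(hu t ht).1, (hu t ht).2.congr_deriv (hgk ht)⟩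

lemma derivWithin_eq (hu : HasSecondDeriv u v g) : EqOn (derivWithin u (Ici 0)) v (Ici 0) :=
  fun t ht => (hu t ht).1.derivWithin (uniqueDiffOn_Ici 0 t ht)

lemma derivWithin_derivWithin_eq (hu : HasSecondDeriv u v g) :
    EqOn (derivWithin (derivWithin u (Ici 0)) (Ici 0)) g (Ici 0) := fun t ht => by
  rw [derivWithin_congr hu.derivWithin_eq (hu.derivWithin_eq ht)]
  exact (hu t ht).2.derivWithin (uniqueDiffOn_Ici 0 t ht)

lemma contDiffOn (hu : HasSecondDeriv u v g) (hg : ContinuousOn g (Ici 0)) :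
    ContDiffOn ℝ 2 u (Ici 0) := by
  have hs : UniqueDiffOn ℝ (Ici (0 : ℝ)) := uniqueDiffOn_Ici 0
  have hv : ContDiffOn ℝ 1 v (Ici 0) := by
    rw [← zero_add 1, contDiffOn_succ_iff_derivWithin hs]
    refine ⟨fun t ht => (hu t ht).2.differentiableWithinAt, by simp, contDiffOn_zero.2 ?_⟩
    exact hg.congr fun t ht => (hu t ht).2.derivWithin (hs t ht)
  rw [← one_add_one_eq_two, contDiffOn_succ_iff_derivWithin hs]
  exact ⟨fun t ht => (hu t ht).1.differentiableWithinAt, by simp, hv.congr hu.derivWithin_eq⟩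

end HasSecondDeriv

lemma hasSecondDeriv_of_contDiffOn {u g : ℝ → ℝ} (hu : ContDiffOn ℝ 2 u (Ici 0))
    (hg : ContinuousOn g (Ici 0))
    (heq : ∀ t ∈ Ioi (0 : ℝ), derivWithin (derivWithin u (Ici 0)) (Ici 0) t = g t) :
    HasSecondDeriv u (derivWithin u (Ici 0)) g := by
  have hs : UniqueDiffOn ℝ (Ici (0 : ℝ)) := uniqueDiffOn_Ici 0
  have hu' : ContDiffOn ℝ 1 (derivWithin u (Ici 0)) (Ici 0) :=
    hu.derivWithin hs one_add_one_eq_two.le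
  have heq' : EqOn (derivWithin (derivWithin u (Ici 0)) (Ici 0)) g (Ici 0) :=
    EqOn.of_subset_closure heq (hu'.continuousOn_derivWithin hs le_rfl) hg
      Ioi_subset_Ici_self (closure_Ioi (0 : ℝ)).ge
  refine fun t ht => ⟨(hu.differentiableOn two_ne_zero t ht).hasDerivWithinAt, ?_⟩
  exact (hu'.differentiableOn one_ne_zero t ht).hasDerivWithinAt.congr_deriv (heq' ht)

theorem exists_hasSecondDeriv_linear {q : ℝ → ℝ} (hq : ContinuousOn q (Ici 0)) (a b : ℝ) :
    ∃ u v : ℝ → ℝ, HasSecondDeriv u v (q * u) ∧ u 0 = a ∧ v 0 = b := by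
  let A : ℝ → ℝ × ℝ →L[ℝ] ℝ × ℝ := fun t =>
    (ContinuousLinearMap.inl ℝ ℝ ℝ).comp (.snd ℝ ℝ ℝ) +
      q (max t 0) • (ContinuousLinearMap.inr ℝ ℝ ℝ).comp (.fst ℝ ℝ ℝ)
  have hA : Continuous A := by
    have hqmax : Continuous fun t => q (max t 0) :=
      hq.comp_continuous (by fun_prop) fun t => le_max_right t 0
    exact continuous_const.add (hqmax.smul continuous_const)
  obtain ⟨X, hX0, hX⟩ := exists_forall_hasDerivAt_linear hA (a, b)
  refine ⟨fun t => (X t).1, fun t => (X t).2, fun t ht => ?_, by simp [hX0], by simp [hX0]⟩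
  have hAX : A t (X t) = ((X t).2, q t * (X t).1) := by
    simp [A, max_eq_left (mem_Ici.1 ht)]
  have hXt : HasDerivAt X ((X t).2, q t * (X t).1) t := hAX ▸ hX t ht
  exact ⟨((ContinuousLinearMap.fst ℝ ℝ ℝ).hasFDerivAt.comp_hasDerivAt t hXt).hasDerivWithinAt,
    ((ContinuousLinearMap.snd ℝ ℝ ℝ).hasFDerivAt.comp_hasDerivAt t hXt).hasDerivWithinAt⟩

/-- The Wronskian `u' φ - u φ'` of `u` and `φ`, whose derivatives are `v` and `ψ`. -/
def wronskian (u v φ ψ : ℝ → ℝ) (t : ℝ) : ℝ :=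
  v t * φ t - u t * ψ t

namespace HasSecondDeriv

variable {q u v φ ψ g k : ℝ → ℝ} {t : ℝ}

lemma hasDerivWithinAt_wronskian (hu : HasSecondDeriv u v g) (hφ : HasSecondDeriv φ ψ k)
    (ht : t ∈ Ici (0 : ℝ)) :
    HasDerivWithinAt (wronskian u v φ ψ) (g t * φ t - u t * k t) (Ici 0) t :=
  (((hu t ht).2.mul (hφ t ht).1).sub ((hu t ht).1.mul (hφ t ht).2)).congr_deriv (by ring)

lemma hasDerivWithinAt_div (hu : HasSecondDeriv u v g) (hφ : HasSecondDeriv φ ψ k)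
    (ht : t ∈ Ici (0 : ℝ)) (hφt : φ t ≠ 0) :
    HasDerivWithinAt (u / φ) (wronskian u v φ ψ t / φ t ^ 2) (Ici 0) t :=
  (hu t ht).1.div (hφ t ht).1 hφt

lemma wronskian_eq_wronskian_zero (hu : HasSecondDeriv u v (q * u))
    (hφ : HasSecondDeriv φ ψ (q * φ)) (ht : t ∈ Ici (0 : ℝ)) :
    wronskian u v φ ψ t = wronskian u v φ ψ 0 := by
  have hderiv (s : ℝ) (hs : 0 ≤ s) : HasDerivWithinAt (wronskian u v φ ψ) 0 (Ici 0) s :=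
    (hu.hasDerivWithinAt_wronskian hφ hs).congr_deriv (by simp only [Pi.mul_apply]; ring)
  exact constant_of_has_deriv_right_zero
    (fun s hs => (hderiv s hs.1).continuousWithinAt.mono Icc_subset_Ici_self)
    (fun s hs => (hderiv s hs.1).mono (Ici_subset_Ici.2 hs.1)) t ⟨ht, le_rfl⟩

lemma eqOn_smul_of_apply_zero_eq_zero (hq : ContinuousOn q (Ici 0))
    (hu : HasSecondDeriv u v (q * u)) (hφ : HasSecondDeriv φ ψ (q * φ))
    (hu0 : u 0 = 0) (hφ0 : φ 0 = 0) (hψ0 : ψ 0 = 1) : EqOn u (v 0 • φ) (Ici 0) := by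
  intro t ht
  obtain ⟨c, d, hc, hc0, hd0⟩ := exists_hasSecondDeriv_linear hq 1 0
  have huφ := hu.wronskian_eq_wronskian_zero hφ ht
  have huc := hu.wronskian_eq_wronskian_zero hc ht
  have hφc := hφ.wronskian_eq_wronskian_zero hc ht
  simp only [wronskian, hu0, hφ0, hψ0, hc0, hd0] at huφ huc hφc
  simp only [Pi.smul_apply, smul_eq_mul]
  linear_combination (-u t) * hφc + φ t * huc - c t * huφ

end HasSecondDeriv

section PositiveSolution

variable {q φ ψ u v : ℝ → ℝ} {μ : ℝ}

lemma hasDerivWithinAt_div_mul_wronskian (hφ : HasSecondDeriv φ ψ fun t => (q t - μ) * φ t)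
    (hφpos : ∀ t ∈ Ici (0 : ℝ), 0 < φ t) (hu : HasSecondDeriv u v (q * u))
    {t : ℝ} (ht : t ∈ Ici (0 : ℝ)) :
    HasDerivWithinAt (u / φ * wronskian u v φ ψ)
      ((wronskian u v φ ψ t / φ t) ^ 2 + μ * u t ^ 2) (Ici 0) t := by
  have hφt := (hφpos t ht).ne'
  refine ((hu.hasDerivWithinAt_div hφ ht hφt).mul
    (hu.hasDerivWithinAt_wronskian hφ ht)).congr_deriv ?_
  simp only [Pi.mul_apply, Pi.div_apply]
  field_simp
  ring

lemma monotoneOn_div_mul_wronskian (hμ : 0 ≤ μ)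
    (hφ : HasSecondDeriv φ ψ fun t => (q t - μ) * φ t)
    (hφpos : ∀ t ∈ Ici (0 : ℝ), 0 < φ t) (hu : HasSecondDeriv u v (q * u)) :
    MonotoneOn (u / φ * wronskian u v φ ψ) (Ici 0) :=
  monotoneOn_of_forall_hasDerivWithinAt_nonneg (convex_Ici 0)
    (fun _ ht => hasDerivWithinAt_div_mul_wronskian hφ hφpos hu ht)
    (fun t _ => by positivity)

lemma strictMonoOn_div_mul_wronskian (hμ : 0 < μ)
    (hφ : HasSecondDeriv φ ψ fun t => (q t - μ) * φ t)
    (hφpos : ∀ t ∈ Ici (0 : ℝ), 0 < φ t) (hu : HasSecondDeriv u v (q * u))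
    (hne : ∀ t ∈ Ici (0 : ℝ), u t ≠ 0 ∨ v t ≠ 0) :
    StrictMonoOn (u / φ * wronskian u v φ ψ) (Ici 0) := by
  refine strictMonoOn_of_forall_hasDerivWithinAt_pos (convex_Ici 0)
    (fun _ ht => hasDerivWithinAt_div_mul_wronskian hφ hφpos hu ht) fun t ht => ?_
  have hφt := hφpos t ht
  rcases eq_or_ne (u t) 0 with hut | hut
  · have hvt : v t ≠ 0 := (hne t ht).resolve_left (not_not.2 hut)
    have hW : wronskian u v φ ψ t = v t * φ t := by simp [wronskian, hut]
    rw [hW]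
    positivity
  · positivity

lemma wronskian_zero_le_wronskian (hμ : 0 ≤ μ)
    (hφ : HasSecondDeriv φ ψ fun t => (q t - μ) * φ t)
    (hφpos : ∀ t ∈ Ici (0 : ℝ), 0 < φ t) (hu : HasSecondDeriv u v (q * u))
    (hu0 : 0 ≤ u 0) (hW0 : 0 < wronskian u v φ ψ 0) {t : ℝ} (ht : t ∈ Ici (0 : ℝ)) :
    wronskian u v φ ψ 0 ≤ wronskian u v φ ψ t := by
  have hderiv {s : ℝ} (hs : s ∈ Ici (0 : ℝ)) := hu.hasDerivWithinAt_wronskian hφ hs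
  have huW (s : ℝ) (hs : s ∈ Ici (0 : ℝ)) : 0 ≤ u s / φ s * wronskian u v φ ψ s :=
    (mul_nonneg (div_nonneg hu0 (hφpos 0 self_mem_Ici).le) hW0.le).trans
      (monotoneOn_div_mul_wronskian hμ hφ hφpos hu self_mem_Ici hs hs)
  have hsq : MonotoneOn (wronskian u v φ ψ ^ 2) (Ici 0) := by
    refine monotoneOn_of_forall_hasDerivWithinAt_nonneg
      (F' := fun s => 2 * μ * φ s ^ 2 * (u s / φ s * wronskian u v φ ψ s)) (convex_Ici 0)
      (fun s hs => ((hderiv hs).pow 2).congr_deriv ?_)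
      fun s hs => mul_nonneg (by positivity) (huW s hs)
    have := (hφpos s hs).ne'
    simp only [Pi.mul_apply]
    field_simp
    ring
  have hsq_le (s : ℝ) (hs : s ∈ Ici (0 : ℝ)) :
      wronskian u v φ ψ 0 ^ 2 ≤ wronskian u v φ ψ s ^ 2 := hsq self_mem_Ici hs hs
  have hWt : 0 ≤ wronskian u v φ ψ t := by
    by_contra! hneg
    obtain ⟨s, hs, hWs⟩ := isPreconnected_Ici.intermediate_value ht self_mem_Ici
      (fun s hs => (hderiv hs).continuousWithinAt) ⟨hneg.le, hW0.le⟩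
    have := hsq_le s hs
    rw [hWs] at this
    nlinarith
  exact le_of_sq_le_sq (hsq_le t ht) hWt

lemma pos_of_wronskian_zero_pos (hμ : 0 ≤ μ)
    (hφ : HasSecondDeriv φ ψ fun t => (q t - μ) * φ t)
    (hφpos : ∀ t ∈ Ici (0 : ℝ), 0 < φ t) (hu : HasSecondDeriv u v (q * u))
    (hu0 : 0 ≤ u 0) (hW0 : 0 < wronskian u v φ ψ 0) {t : ℝ} (ht : 0 < t) : 0 < u t := by
  have hmono : StrictMonoOn (u / φ) (Ici 0) :=
    strictMonoOn_of_forall_hasDerivWithinAt_pos (convex_Ici 0)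
      (fun s hs => hu.hasDerivWithinAt_div hφ hs (hφpos s hs).ne') fun s hs =>
        div_pos (hW0.trans_le (wronskian_zero_le_wronskian hμ hφ hφpos hu hu0 hW0 hs))
          (pow_pos (hφpos s hs) 2)
  have hlt : u 0 / φ 0 < u t / φ t := hmono self_mem_Ici ht.le ht
  exact (div_pos_iff_of_pos_right (hφpos t ht.le)).1
    ((div_nonneg hu0 (hφpos 0 self_mem_Ici).le).trans_lt hlt)

theorem not_bddAbove_of_wronskian_zero_pos (hμ : 0 ≤ μ)
    (hφ : HasSecondDeriv φ ψ fun t => (q t - μ) * φ t)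
    (hφpos : ∀ t ∈ Ici (0 : ℝ), 0 < φ t) (hu : HasSecondDeriv u v (q * u))
    (hu0 : 0 ≤ u 0) (hW0 : 0 < wronskian u v φ ψ 0) : ¬ BddAbove (u '' Ici 0) := by
  rintro ⟨M, hM⟩
  have hupos {t : ℝ} (ht : t ∈ Ici (1 : ℝ)) : 0 < u t :=
    pos_of_wronskian_zero_pos hμ hφ hφpos hu hu0 hW0 (one_pos.trans_le ht)
  have hsub : Ici (1 : ℝ) ⊆ Ici 0 := Ici_subset_Ici.2 zero_le_one
  have huM {t : ℝ} (ht : t ∈ Ici (1 : ℝ)) : u t ≤ M := hM (mem_image_of_mem u (hsub ht))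
  set c := wronskian u v φ ψ 0 / M ^ 2
  have hc : 0 < c := div_pos hW0 (pow_pos ((hupos self_mem_Ici).trans_le (huM self_mem_Ici)) 2)
  -- If `u ≤ M`, then `(φ / u)' = -W / u² ≤ -c`, so the positive function `φ / u` would reach `0`.
  have hmono : MonotoneOn (fun t => -(φ t / u t) - c * t) (Ici 1) := by
    refine monotoneOn_of_forall_hasDerivWithinAt_nonneg (convex_Ici 1)
      (fun t ht => (((hφ.hasDerivWithinAt_div hu (hsub ht) (hupos ht).ne').neg.sub
        ((hasDerivWithinAt_id t _).const_mul c)).mono hsub)) fun t ht => ?_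
    have hW : -wronskian φ ψ u v t = wronskian u v φ ψ t := by simp only [wronskian]; ring
    rw [← neg_div, hW, mul_one, sub_nonneg]
    exact div_le_div₀ (hW0.le.trans (wronskian_zero_le_wronskian hμ hφ hφpos hu hu0 hW0 (hsub ht)))
      (wronskian_zero_le_wronskian hμ hφ hφpos hu hu0 hW0 (hsub ht))
      (pow_pos (hupos ht) 2) (pow_le_pow_left₀ (hupos ht).le (huM ht) 2)
  have hratio {t : ℝ} (ht : t ∈ Ici (1 : ℝ)) : 0 < φ t / u t :=
    div_pos (hφpos t (hsub ht)) (hupos ht)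
  set T := 1 + φ 1 / u 1 / c
  have hT : (1 : ℝ) ≤ T := le_add_of_nonneg_right (div_pos (hratio self_mem_Ici) hc).le
  have hle := hmono self_mem_Ici hT hT
  have hcT : c * T = c + φ 1 / u 1 := by simp only [T]; field_simp
  simp only [hcT] at hle
  linarith [hratio hT]

lemma setOf_add_mul_mul_add_mul_nonpos_eq_uIcc {a b c d : ℝ} (hb : 0 < b) (hd : 0 < d) :
    {x : ℝ | (a + x * b) * (c + x * d) ≤ 0} = uIcc (-a / b) (-c / d) := by
  ext x
  rw [mem_ofPred_eq, mul_nonpos_iff, mem_uIcc, div_le_iff₀ hb, div_le_iff₀ hd, le_div_iff₀ hb,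
    le_div_iff₀ hd]
  constructor <;> rintro (⟨h₁, h₂⟩ | ⟨h₁, h₂⟩) <;> [left; right; left; right] <;>
    constructor <;> linarith

lemma exists_setOf_div_mul_wronskian_nonpos_eq_uIcc (u₀ v₀ : ℝ → ℝ) {t : ℝ} (hφt : 0 < φ t)
    (hut : 0 < u t) (hWt : 0 < wronskian u v φ ψ t) :
    ∃ x y, {b : ℝ | ((u₀ + b • u) / φ * wronskian (u₀ + b • u) (v₀ + b • v) φ ψ) t ≤ 0}
      = uIcc x y := by
  refine ⟨_, _, Eq.trans (ext fun b => ?_) (setOf_add_mul_mul_add_mul_nonpos_eq_uIcc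
    (a := u₀ t / φ t) (c := wronskian u₀ v₀ φ ψ t) (div_pos hut hφt) hWt)⟩
  have hsplit : ((u₀ + b • u) / φ * wronskian (u₀ + b • u) (v₀ + b • v) φ ψ) t
      = (u₀ t / φ t + b * (u t / φ t)) * (wronskian u₀ v₀ φ ψ t + b * wronskian u v φ ψ t) := by
    simp only [wronskian, Pi.mul_apply, Pi.div_apply, Pi.add_apply, Pi.smul_apply, smul_eq_mul]
    ring
  simp only [mem_ofPred_eq, hsplit]

theorem exists_div_mul_wronskian_nonpos (hμ : 0 ≤ μ) (hq : ContinuousOn q (Ici 0))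
    (hφ : HasSecondDeriv φ ψ fun t => (q t - μ) * φ t)
    (hφpos : ∀ t ∈ Ici (0 : ℝ), 0 < φ t) :
    ∃ h k : ℝ → ℝ, HasSecondDeriv h k (q * h) ∧ h 0 = 1 ∧
      ∀ t ∈ Ici (0 : ℝ), (h / φ * wronskian h k φ ψ) t ≤ 0 := by
  obtain ⟨u₀, v₀, hu₀, hu₀0, -⟩ := exists_hasSecondDeriv_linear hq 1 0
  obtain ⟨u₁, v₁, hu₁, hu₁0, hv₁0⟩ := exists_hasSecondDeriv_linear hq 0 1
  have hW0 : 0 < wronskian u₁ v₁ φ ψ 0 := by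
    simpa [wronskian, hu₁0, hv₁0] using hφpos 0 self_mem_Ici
  have hcomb (b : ℝ) : HasSecondDeriv (u₀ + b • u₁) (v₀ + b • v₁) (q * (u₀ + b • u₁)) :=
    (hu₀.add (hu₁.const_smul b)).congr_right fun t _ => by
      simp only [Pi.add_apply, Pi.smul_apply, Pi.mul_apply, smul_eq_mul]; ring
  -- Shooting: the slopes `b` that satisfy the inequality up to time `t` form a compact interval
  -- that shrinks as `t` grows.
  let K : ℝ → Set ℝ := fun t =>
    {b | ((u₀ + b • u₁) / φ * wronskian (u₀ + b • u₁) (v₀ + b • v₁) φ ψ) t ≤ 0}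
  have hK_anti : AntitoneOn K (Ici 0) := fun s hs t ht hst b hb =>
    (monotoneOn_div_mul_wronskian hμ hφ hφpos (hcomb b) hs ht hst).trans hb
  have hK (t : ℝ) (ht : 0 < t) : IsCompact (K t) ∧ (K t).Nonempty := by
    obtain ⟨x, y, hxy⟩ := exists_setOf_div_mul_wronskian_nonpos_eq_uIcc u₀ v₀ (hφpos t ht.le)
      (pos_of_wronskian_zero_pos hμ hφ hφpos hu₁ hu₁0.ge hW0 ht)
      (hW0.trans_le (wronskian_zero_le_wronskian hμ hφ hφpos hu₁ hu₁0.ge hW0 ht.le))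
    exact (show K t = uIcc x y from hxy) ▸ ⟨isCompact_uIcc, nonempty_uIcc⟩
  obtain ⟨b, hb⟩ := IsCompact.nonempty_iInter_of_sequence_nonempty_isCompact_isClosed
    (fun n : ℕ => K (n + 1))
    (fun n => hK_anti (mem_Ici.2 (by positivity)) (mem_Ici.2 (by positivity)) (by simp))
    (fun n => (hK _ (by positivity)).2) (hK _ (by positivity)).1
    (fun n => (hK _ (by positivity)).1.isClosed)
  refine ⟨u₀ + b • u₁, v₀ + b • v₁, hcomb b, by simp [hu₀0, hu₁0], fun t ht => ?_⟩
  obtain ⟨n, hn⟩ := exists_nat_ge t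
  exact hK_anti ht (mem_Ici.2 (by positivity)) (hn.trans (by simp)) (mem_iInter.1 hb n)

theorem exists_div_mul_wronskian_neg (hμ : 0 < μ) (hq : ContinuousOn q (Ici 0))
    (hφ : HasSecondDeriv φ ψ fun t => (q t - μ) * φ t)
    (hφpos : ∀ t ∈ Ici (0 : ℝ), 0 < φ t) :
    ∃ h k : ℝ → ℝ, HasSecondDeriv h k (q * h) ∧ h 0 = 1 ∧
      ∀ t ∈ Ici (0 : ℝ), (h / φ * wronskian h k φ ψ) t < 0 := by
  obtain ⟨h, k, hh, hh0, hnonpos⟩ := exists_div_mul_wronskian_nonpos hμ.le hq hφ hφpos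
  obtain ⟨u, v, hu, hu0, hv0⟩ := exists_hasSecondDeriv_linear hq 0 1
  have hne (t : ℝ) (ht : t ∈ Ici (0 : ℝ)) : h t ≠ 0 ∨ k t ≠ 0 := by
    have hW := hh.wronskian_eq_wronskian_zero hu ht
    by_contra! hzero
    simp [wronskian, hzero, hh0, hu0, hv0] at hW
  refine ⟨h, k, hh, hh0, fun t ht => ?_⟩
  have ht₁ : t + 1 ∈ Ici (0 : ℝ) := add_nonneg (mem_Ici.1 ht) zero_le_one
  exact (strictMonoOn_div_mul_wronskian hμ hφ hφpos hh hne ht ht₁ (lt_add_one t)).trans_le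
    (hnonpos _ ht₁)

theorem exists_hasSecondDeriv_abs_lt (hμ : 0 < μ) (hq : ContinuousOn q (Ici 0))
    (hφ : HasSecondDeriv φ ψ fun t => (q t - μ) * φ t)
    (hφpos : ∀ t ∈ Ici (0 : ℝ), 0 < φ t) :
    ∃ h k : ℝ → ℝ, HasSecondDeriv h k (q * h) ∧ h 0 = 1 ∧ wronskian h k φ ψ 0 < 0 ∧
      ∀ t ∈ Ioi (0 : ℝ), |φ 0 * h t| < φ t := by
  obtain ⟨h, k, hh, hh0, hneg⟩ := exists_div_mul_wronskian_neg hμ hq hφ hφpos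
  have hφ0 := hφpos 0 self_mem_Ici
  refine ⟨h, k, hh, hh0, ?_, fun t ht => ?_⟩
  · have hneg0 : h 0 / φ 0 * wronskian h k φ ψ 0 < 0 := hneg 0 self_mem_Ici
    rw [hh0] at hneg0
    exact (pos_iff_neg_of_mul_neg hneg0).1 (one_div_pos.2 hφ0)
  · have hmono : StrictMonoOn (-(h / φ) ^ 2) (Ici 0) := by
      refine strictMonoOn_of_forall_hasDerivWithinAt_pos
        (F' := fun s => -(2 * (h s / φ s * wronskian h k φ ψ s) / φ s ^ 2)) (convex_Ici 0)
        (fun s hs =>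
          ((hh.hasDerivWithinAt_div hφ hs (hφpos s hs).ne').pow 2).neg.congr_deriv ?_)
        fun s hs => neg_pos.2 <| div_neg_of_neg_of_pos
          (mul_neg_of_pos_of_neg two_pos (hneg s hs)) (pow_pos (hφpos s hs) 2)
      simp only [Pi.div_apply]
      ring
    have hφt := hφpos t (Ioi_subset_Ici_self ht)
    have hlt : (h t / φ t) ^ 2 < (h 0 / φ 0) ^ 2 :=
      neg_lt_neg_iff.1 (hmono self_mem_Ici (Ioi_subset_Ici_self ht) ht)
    rw [hh0, div_pow, div_pow, one_pow, div_lt_div_iff₀ (by positivity) (by positivity)] at hlt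
    exact abs_lt_of_sq_lt_sq (by linarith [mul_pow (φ 0) (h t) 2]) hφt.le

theorem exists_pos_hasSecondDeriv_mul_sub (hμ : 0 < μ) (hq : ContinuousOn q (Ici 0))
    (hφ : HasSecondDeriv φ ψ fun t => (q t - μ) * φ t)
    (hφpos : ∀ t ∈ Ici (0 : ℝ), 0 < φ t) :
    ∃ p p' : ℝ → ℝ, HasSecondDeriv p p' (q * p - φ) ∧ p 0 = 0 ∧ 0 < p' 0 ∧
      (∀ t ∈ Ioi (0 : ℝ), 0 < p t) ∧ ∀ t ∈ Ici (0 : ℝ), |p t| ≤ 2 * φ t / μ := by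
  obtain ⟨h, k, hh, hh0, hW0, hlt⟩ := exists_hasSecondDeriv_abs_lt hμ hq hφ hφpos
  refine ⟨μ⁻¹ • (φ - φ 0 • h), μ⁻¹ • (ψ - φ 0 • k),
    ((hφ.sub (hh.const_smul (φ 0))).const_smul μ⁻¹).congr_right fun t _ => ?_,
    by simp [hh0], ?_, fun t ht => ?_, fun t ht => ?_⟩
  · simp only [Pi.smul_apply, Pi.sub_apply, Pi.mul_apply, smul_eq_mul]
    field_simp
    ring
  · simp only [wronskian, hh0] at hW0
    exact mul_pos (inv_pos.2 hμ) (by simp only [Pi.sub_apply, Pi.smul_apply, smul_eq_mul]; linarith)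
  · exact mul_pos (inv_pos.2 hμ) (sub_pos.2 (abs_lt.1 (hlt t ht)).2)
  · have hle : |φ 0 * h t| ≤ φ t := by
      rcases eq_or_lt_of_le (mem_Ici.1 ht) with rfl | ht
      · rw [hh0, mul_one, abs_of_pos (hφpos 0 self_mem_Ici)]
      · exact (hlt t ht).le
    simp only [Pi.smul_apply, Pi.sub_apply, smul_eq_mul, abs_mul, abs_of_pos (inv_pos.2 hμ),
      div_eq_inv_mul]
    gcongr
    calc |φ t - φ 0 * h t| ≤ |φ t| + |φ 0 * h t| := abs_sub _ _
      _ ≤ φ t + φ t := add_le_add (abs_of_pos (hφpos t ht)).le hle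
      _ = 2 * φ t := (two_mul _).symm

theorem eqOn_of_hasSecondDeriv_of_abs_le (hμ : 0 ≤ μ) (hq : ContinuousOn q (Ici 0))
    (hφ : HasSecondDeriv φ ψ fun t => (q t - μ) * φ t)
    (hφpos : ∀ t ∈ Ici (0 : ℝ), 0 < φ t) {g p₁ p₁' p₂ p₂' : ℝ → ℝ} {M₁ M₂ : ℝ}
    (h₁ : HasSecondDeriv p₁ p₁' (q * p₁ + g)) (h₂ : HasSecondDeriv p₂ p₂' (q * p₂ + g))
    (h0 : p₁ 0 = p₂ 0) (hM₁ : ∀ t ∈ Ici (0 : ℝ), |p₁ t| ≤ M₁)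
    (hM₂ : ∀ t ∈ Ici (0 : ℝ), |p₂ t| ≤ M₂) : EqOn p₁ p₂ (Ici 0) := by
  obtain ⟨u, v, hu, hu0, hv0⟩ := exists_hasSecondDeriv_linear hq 0 1
  have hW0 : 0 < wronskian u v φ ψ 0 := by
    simpa [wronskian, hu0, hv0] using hφpos 0 self_mem_Ici
  have hdiff : HasSecondDeriv (p₁ - p₂) (p₁' - p₂') (q * (p₁ - p₂)) :=
    (h₁.sub h₂).congr_right fun t _ => by
      simp only [Pi.sub_apply, Pi.add_apply, Pi.mul_apply]; ring
  set c := (p₁' - p₂') 0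
  have hsmul : EqOn (p₁ - p₂) (c • u) (Ici 0) :=
    hdiff.eqOn_smul_of_apply_zero_eq_zero hq hu (sub_eq_zero.2 h0) hu0 hv0
  have hc : c = 0 := by
    by_contra hc
    refine not_bddAbove_of_wronskian_zero_pos hμ hφ hφpos hu hu0.ge hW0
      ⟨(M₁ + M₂) / |c|, forall_mem_image.2 fun t ht => ?_⟩
    rw [le_div_iff₀ (abs_pos.2 hc)]
    calc u t * |c| ≤ |u t| * |c| := by gcongr; exact le_abs_self _
      _ = |p₁ t - p₂ t| := by
        rw [← abs_mul, mul_comm]; exact congrArg abs (hsmul ht).symm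
      _ ≤ |p₁ t| + |p₂ t| := abs_sub _ _
      _ ≤ M₁ + M₂ := add_le_add (hM₁ t ht) (hM₂ t ht)
  intro t ht
  simpa [hc, sub_eq_zero] using hsmul ht

end PositiveSolution

section Linearization

variable {f w p : ℝ → ℝ} {μ : ℝ}

lemma hasSecondDeriv_derivWithin_of_ode (hf : ContDiff ℝ 1 f) (hw : ContDiffOn ℝ 2 w (Ici 0))
    (hode : ∀ t ∈ Ioi (0 : ℝ), derivWithin (derivWithin w (Ici 0)) (Ici 0) t + f (w t) = 0) :
    HasSecondDeriv (derivWithin w (Ici 0)) (fun t => -f (w t))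
      (fun t => -deriv f (w t) * derivWithin w (Ici 0) t) := by
  have hw' : HasSecondDeriv w (derivWithin w (Ici 0)) fun t => -f (w t) :=
    hasSecondDeriv_of_contDiffOn hw (hf.continuous.comp_continuousOn hw.continuousOn).neg
      fun t ht => eq_neg_of_add_eq_zero_left (hode t ht)
  intro t ht
  refine ⟨(hw' t ht).2, ?_⟩
  exact (((hf.differentiable one_ne_zero (w t)).hasDerivAt.comp_hasDerivWithinAt t
    (hw' t ht).1).neg).congr_deriv (neg_mul _ _).symm

lemma continuousOn_sub_deriv_comp (hf : ContDiff ℝ 1 f) (hw : ContinuousOn w (Ici 0)) (μ : ℝ) :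
    ContinuousOn (fun t => μ - deriv f (w t)) (Ici 0) :=
  continuousOn_const.sub ((hf.continuous_deriv le_rfl).comp_continuousOn hw)

lemma isBddSolMu_iff (hf : ContDiff ℝ 1 f) (hw : ContDiffOn ℝ 2 w (Ici 0)) :
    IsBddSolMu f w μ p ↔
      (∃ p', HasSecondDeriv p p' ((fun t => μ - deriv f (w t)) * p + -derivWithin w (Ici 0))) ∧
        p 0 = 0 ∧ ∃ M, ∀ t ∈ Ici (0 : ℝ), |p t| ≤ M := by
  have hrhs (hp : ContinuousOn p (Ici 0)) :
      ContinuousOn ((fun t => μ - deriv f (w t)) * p + -derivWithin w (Ici 0)) (Ici 0) :=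
    ((continuousOn_sub_deriv_comp hf hw.continuousOn μ).mul hp).add
      (hw.continuousOn_derivWithin (uniqueDiffOn_Ici 0) one_le_two).neg
  constructor
  · rintro ⟨hp, heq, hp0, hM⟩
    refine ⟨⟨_, hasSecondDeriv_of_contDiffOn hp (hrhs hp.continuousOn) fun t ht => ?_⟩, hp0, hM⟩
    simp only [Pi.add_apply, Pi.mul_apply, Pi.neg_apply]
    linear_combination heq t ht
  · rintro ⟨⟨p', hp⟩, hp0, hM⟩
    refine ⟨hp.contDiffOn (hrhs hp.continuousOn), fun t ht => ?_, hp0, hM⟩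
    rw [hp.derivWithin_derivWithin_eq (Ioi_subset_Ici_self ht)]
    simp only [Pi.add_apply, Pi.mul_apply, Pi.neg_apply]
    ring

theorem unique_bounded_solution_mu_general (f w : ℝ → ℝ) (hf : ContDiff ℝ 1 f)
    (hw : ContDiffOn ℝ 2 w (Ici 0))
    (hode : ∀ t ∈ Ioi (0 : ℝ), derivWithin (derivWithin w (Ici 0)) (Ici 0) t + f (w t) = 0)
    (hpos : ∀ t ∈ Ici (0 : ℝ), 0 < derivWithin w (Ici 0) t)
    (hbdd : ∃ M, ∀ t ∈ Ici (0 : ℝ), derivWithin w (Ici 0) t ≤ M) (μ : ℝ) (hμ : 0 < μ) :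
    ∃ p : ℝ → ℝ, IsBddSolMu f w μ p ∧
      (∀ p₂ : ℝ → ℝ, IsBddSolMu f w μ p₂ → Set.EqOn p₂ p (Set.Ici 0)) ∧
      (∀ t ∈ Set.Ioi (0 : ℝ), 0 < p t) ∧
      0 < derivWithin p (Set.Ici 0) 0 := by
  obtain ⟨M, hM⟩ := hbdd
  have hq := continuousOn_sub_deriv_comp hf hw.continuousOn μ
  have hφ : HasSecondDeriv (derivWithin w (Ici 0)) (fun t => -f (w t))
      fun t => (μ - deriv f (w t) - μ) * derivWithin w (Ici 0) t :=
    (hasSecondDeriv_derivWithin_of_ode hf hw hode).congr_right fun t _ => by ring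
  obtain ⟨p, p', hp, hp0, hp'0, hp_pos, hpφ⟩ := exists_pos_hasSecondDeriv_mul_sub hμ hq hφ hpos
  rw [sub_eq_add_neg] at hp
  have hpM (t : ℝ) (ht : t ∈ Ici (0 : ℝ)) : |p t| ≤ 2 * M / μ :=
    (hpφ t ht).trans (by gcongr; exact hM t ht)
  refine ⟨p, (isBddSolMu_iff hf hw).2 ⟨⟨p', hp⟩, hp0, _, hpM⟩, fun p₂ hp₂ => ?_,
    hp_pos, by rwa [hp.derivWithin_eq self_mem_Ici]⟩
  obtain ⟨⟨p₂', hp₂⟩, hp₂0, M₂, hM₂⟩ := (isBddSolMu_iff hf hw).1 hp₂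
  exact eqOn_of_hasSecondDeriv_of_abs_le hμ.le hq hφ hpos hp₂ hp (hp₂0.trans hp0.symm) hM₂ hpM

lemma IsHeteroclinic.mem_Ioo (hw : IsHeteroclinic f w) {t : ℝ} (ht : 0 < t) :
    w t ∈ Ioo (0 : ℝ) 1 := by
  obtain ⟨-, -, -, hlim, hpos, hmono, -⟩ := hw
  have ht₁ : t + 1 ∈ Ici (0 : ℝ) := add_nonneg ht.le zero_le_one
  refine ⟨hpos t ht, (hmono ht.le ht₁ (lt_add_one t)).trans_le (ge_of_tendsto hlim ?_)⟩
  filter_upwards [eventually_ge_atTop (t + 1)] with s hs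
  exact hmono.monotoneOn ht₁ (ht₁.trans hs) hs

lemma IsHeteroclinic.derivWithin_le_derivWithin_zero (hw : IsHeteroclinic f w)
    (hf : ∀ s ∈ Ioo (0 : ℝ) 1, 0 ≤ f s) {t : ℝ} (ht : t ∈ Ici (0 : ℝ)) :
    derivWithin w (Ici 0) t ≤ derivWithin w (Ici 0) 0 := by
  have hw' : ContDiffOn ℝ 1 (derivWithin w (Ici 0)) (Ici 0) :=
    hw.1.derivWithin (uniqueDiffOn_Ici 0) one_add_one_eq_two.le
  refine antitoneOn_of_hasDerivWithinAt_nonpos (f' := fun s => -f (w s)) (convex_Ici 0)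
    hw'.continuousOn (fun s hs => ?_) (fun s hs => ?_) self_mem_Ici ht ht
  · have hs0 : s ∈ Ioi (0 : ℝ) := interior_Ici (a := (0 : ℝ)) ▸ hs
    exact ((hw'.differentiableOn one_ne_zero s (interior_subset hs)).hasDerivWithinAt.congr_deriv
      (eq_neg_of_add_eq_zero_left (hw.2.1 s hs0))).mono interior_subset
  · have hs0 : s ∈ Ioi (0 : ℝ) := interior_Ici (a := (0 : ℝ)) ▸ hs
    exact neg_nonpos.2 (hf _ (hw.mem_Ioo hs0))

end Linearization

/-- For `μ > 0`, the problem `p'' - μp + f'(w)p = -w'` on `(0,∞)` with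
`p(0) = 0` has a unique bounded solution; it is positive on `(0,∞)` and `p'(0) > 0`. -/
theorem unique_bounded_solution_mu (f w : ℝ → ℝ) (hf : Monostable f)
    (hw : IsHeteroclinic f w) (μ : ℝ) (hμ : 0 < μ) :
    ∃ p : ℝ → ℝ, IsBddSolMu f w μ p ∧
      (∀ p₂ : ℝ → ℝ, IsBddSolMu f w μ p₂ → Set.EqOn p₂ p (Set.Ici 0)) ∧
      (∀ t ∈ Set.Ioi (0 : ℝ), 0 < p t) ∧
      0 < derivWithin p (Set.Ici 0) 0 :=
  unique_bounded_solution_mu_general f w (hf.1.of_le (by exact_mod_cast le_top)) hw.1 hw.2.1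
    hw.2.2.2.2.2.2
    ⟨_, fun _ => hw.derivWithin_le_derivWithin_zero fun s hs => (hf.2.2.2.1 s hs).le⟩ μ hμ
end

section
/- Let f be a monostable nonlinearity and w the associated heteroclinic. Then there exists a constant a > 0 such that for every continuously differentiable function q : [0,∞) → ℝ with compact support and q(0) = 0, one has a · ∫₀^∞ q(t)² dt ≤ ∫₀^∞ ( q'(t)² − f'(w(t)) q(t)² ) dt. -/
open Set Filter MeasureTheory

/-!
Put `p = f(w) / w' = -w'' / w'` and `V = f'(w)`. Since `w'` solves `φ'' + V φ = 0`, the function `p`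
solves the Riccati equation `p' = p² + V`, and it is nonnegative because `w` is concave. Integrating
`(ψ q²)'` and completing the square gives `∫ (q'² - V q²) ≥ lam ∫ q²` as soon as
`ψ' + ψ² + V + lam ≤ 0`. The choice `ψ = -p` (Jacobi's substitution `q = w' r`) only reaches
`lam = 0`; the perturbation `ψ = -p + ε (1 + e⁻ᵗ)` reaches `lam = ε²`, because `e⁻ᵗ` pays for the
error on bounded intervals while `p` pays for it at infinity. There `p` is bounded away from zero:
`V → f'(1) < 0`, and a solution of `p' ≤ p² - c` which drops below `√c` decreases at least linearly
and so cannot stay nonnegative.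
-/

theorem lt_of_strictMonoOn_Ici_of_tendsto {α β : Type*} [SemilatticeSup α] [NoMaxOrder α]
    [TopologicalSpace β] [Preorder β] [OrderClosedTopology β] {g : α → β} {a t : α} {b : β}
    (hg : StrictMonoOn g (Ici a)) (hlim : Tendsto g atTop (nhds b)) (ht : t ∈ Ici a) : g t < b := by
  have : Nonempty α := ⟨t⟩
  obtain ⟨s, hts⟩ := exists_gt t
  have hs : s ∈ Ici a := le_trans ht hts.le
  refine (hg ht hs hts).trans_le (ge_of_tendsto hlim ?_)
  filter_upwards [eventually_ge_atTop s] with r hsr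
  exact hg.monotoneOn hs (le_trans hs hsr) hsr

theorem hasDerivAt_derivWithin_Ici {E : Type*} [NormedAddCommGroup E] [NormedSpace ℝ E]
    {g : ℝ → E} {a t : ℝ} (hg : DifferentiableOn ℝ g (Ici a)) (ht : t ∈ Ioi a) :
    HasDerivAt g (derivWithin g (Ici a) t) t :=
  (hg t (Ioi_subset_Ici_self ht)).hasDerivWithinAt.hasDerivAt (Ici_mem_nhds ht)

theorem strictMonoOn_Ici_of_derivWithin_pos {g : ℝ → ℝ} {a : ℝ} (hg : ContinuousOn g (Ici a))
    (hpos : ∀ t ∈ Ioi a, 0 < derivWithin g (Ici a) t) : StrictMonoOn g (Ici a) := by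
  refine strictMonoOn_of_deriv_pos (convex_Ici a) hg fun t ht => ?_
  rw [interior_Ici] at ht
  rw [← derivWithin_of_mem_nhds (Ici_mem_nhds ht)]
  exact hpos t ht

section CompactSupport

variable {E : Type*} [NormedAddCommGroup E]

theorem integrableOn_of_continuousOn_of_hasCompactSupport {X : Type*} [TopologicalSpace X]
    [T2Space X] [MeasurableSpace X] [OpensMeasurableSpace X] {μ : Measure X}
    [IsFiniteMeasureOnCompacts μ] {g : X → E} {s : Set X} (hs : IsClosed s)
    (hg : ContinuousOn g s) (hsupp : HasCompactSupport g) : IntegrableOn g s μ := by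
  have hint : IntegrableOn g (s ∩ tsupport g) μ :=
    (hg.mono inter_subset_left).integrableOn_compact (hsupp.isCompact.inter_left hs)
  refine hint.of_forall_sdiff_eq_zero hs.measurableSet fun x hx => ?_
  exact image_eq_zero_of_notMem_tsupport fun hxg => hx.2 ⟨hx.1, hxg⟩

theorem integral_Ioi_eq_neg_of_hasCompactSupport [NormedSpace ℝ E] [CompleteSpace E]
    {F F' : ℝ → E} {a : ℝ} (hF : HasCompactSupport F) (hcont : ContinuousWithinAt F (Ici a) a)
    (hderiv : ∀ t ∈ Ioi a, HasDerivAt F (F' t) t) (hint : IntegrableOn F' (Ioi a)) :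
    ∫ t in Ioi a, F' t = -F a := by
  have hlim : Tendsto F atTop (nhds 0) := hF.is_zero_at_infty.mono_left atTop_le_cocompact
  rw [integral_Ioi_of_hasDerivAt_of_tendsto hcont hderiv hint hlim, zero_sub]

end CompactSupport

theorem sqrt_le_of_hasDerivAt_le_sq_sub {p p' : ℝ → ℝ} {c T : ℝ}
    (hp : ∀ t ∈ Ici T, HasDerivAt p (p' t) t) (hp' : ∀ t ∈ Ici T, p' t ≤ p t ^ 2 - c)
    (hp0 : ∀ t ∈ Ici T, 0 ≤ p t) : ∀ t ∈ Ici T, √c ≤ p t := by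
  intro t₀ ht₀
  by_contra! hlt
  have hpt₀ : 0 ≤ p t₀ := hp0 t₀ ht₀
  set m := (c - p t₀ ^ 2) / 2 with hm
  have hm0 : 0 < m := half_pos (sub_pos.2 ((Real.lt_sqrt hpt₀).1 hlt))
  set b := t₀ + (p t₀ + 1) / m with hb
  have ht₀b : t₀ ≤ b := le_add_of_nonneg_right (by positivity)
  have hIci {t : ℝ} (ht : t₀ ≤ t) : t ∈ Ici T := le_trans ht₀ ht
  have hline : ∀ ⦃t⦄, t ∈ Icc t₀ b → p t ≤ p t₀ - m * (t - t₀) := by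
    refine image_le_of_deriv_right_lt_deriv_boundary (f' := p') (B' := fun _ => -m)
      (fun t ht => (hp t (hIci ht.1)).continuousAt.continuousWithinAt)
      (fun t ht => (hp t (hIci ht.1)).hasDerivWithinAt) (by simp) (fun t => ?_) fun t ht hpt => ?_
    · simpa using (((hasDerivAt_id t).sub_const t₀).const_mul m).const_sub (p t₀)
    · have hle : p t ≤ p t₀ := by
        rw [hpt]
        exact sub_le_self _ (mul_nonneg hm0.le (sub_nonneg.2 ht.1))
      have hsq : p t ^ 2 ≤ p t₀ ^ 2 := pow_le_pow_left₀ (hp0 t (hIci ht.1)) hle 2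
      linarith [hp' t (hIci ht.1)]
  have hpb : p b ≤ -1 := by
    have hmb : m * (b - t₀) = p t₀ + 1 := by rw [hb, add_sub_cancel_left, mul_div_cancel₀ _ hm0.ne']
    linarith [hline (right_mem_Icc.2 ht₀b)]
  linarith [hp0 b (hIci ht₀b)]

theorem mul_integral_sq_le_of_riccati {V ψ ψ' q : ℝ → ℝ} {a lam : ℝ}
    (hV : ContinuousOn V (Ici a)) (hψ : ContinuousOn ψ (Ici a)) (hψ' : ContinuousOn ψ' (Ici a))
    (hderiv : ∀ t ∈ Ioi a, HasDerivAt ψ (ψ' t) t)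
    (hsub : ∀ t ∈ Ioi a, ψ' t + ψ t ^ 2 + V t + lam ≤ 0)
    (hq : ContDiff ℝ 1 q) (hsupp : HasCompactSupport q) (hqa : q a = 0) :
    lam * ∫ t in Ioi a, q t ^ 2 ≤ ∫ t in Ioi a, (deriv q t ^ 2 - V t * q t ^ 2) := by
  have hqc : Continuous q := hq.continuous
  have hsq : HasCompactSupport fun t => q t ^ 2 := hsupp.comp_left (zero_pow two_ne_zero)
  have hsq' : HasCompactSupport fun t => deriv q t ^ 2 :=
    hsupp.deriv.comp_left (zero_pow two_ne_zero)
  have hintegrable {g : ℝ → ℝ} (hg : ContinuousOn g (Ici a)) (hgs : HasCompactSupport g) :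
      IntegrableOn g (Ioi a) :=
    (integrableOn_of_continuousOn_of_hasCompactSupport isClosed_Ici hg hgs).mono_set
      Ioi_subset_Ici_self
  set G : ℝ → ℝ := fun t => ψ' t * q t ^ 2 + ψ t * (2 * q t * deriv q t)
  have hG : IntegrableOn G (Ioi a) :=
    hintegrable (by fun_prop) (hsq.mul_left.add hsupp.mul_left.mul_right.mul_left)
  have hsqInt : IntegrableOn (fun t => lam * q t ^ 2) (Ioi a) :=
    hintegrable (by fun_prop) hsq.mul_left
  have henergy : IntegrableOn (fun t => deriv q t ^ 2 - V t * q t ^ 2) (Ioi a) :=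
    hintegrable (by fun_prop) (hsq'.sub hsq.mul_left)
  have hboundary : ∫ t in Ioi a, G t = 0 := by
    have hψsq : HasCompactSupport fun t => ψ t * q t ^ 2 := hsq.mul_left
    have hderiv' : ∀ t ∈ Ioi a, HasDerivAt (fun t => ψ t * q t ^ 2) (G t) t := fun t ht => by
      have hqt : HasDerivAt q (deriv q t) t := (hq.differentiable one_ne_zero t).hasDerivAt
      simpa using (hderiv t ht).fun_mul (hqt.fun_pow 2)
    simpa [hqa] using integral_Ioi_eq_neg_of_hasCompactSupport hψsq
      ((hψ a self_mem_Ici).mul (by fun_prop)) hderiv' hG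
  calc lam * ∫ t in Ioi a, q t ^ 2
      = ∫ t in Ioi a, (lam * q t ^ 2 + G t) := by
        rw [integral_add hsqInt hG, hboundary, integral_const_mul, add_zero]
    _ ≤ ∫ t in Ioi a, (deriv q t ^ 2 - V t * q t ^ 2) := by
        refine setIntegral_mono_on (hsqInt.add hG) henergy measurableSet_Ioi fun t ht => ?_
        have hsquare : 0 ≤ (deriv q t - ψ t * q t) ^ 2 := sq_nonneg _
        have hdefect : (ψ' t + ψ t ^ 2 + V t + lam) * q t ^ 2 ≤ 0 :=
          mul_nonpos_of_nonpos_of_nonneg (hsub t ht) (sq_nonneg _)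
        linarith

theorem riccati_perturbation_nonpos {p v e ε : ℝ} (hp : 0 ≤ p) (he : 0 ≤ e) (he1 : e ≤ 1)
    (hε : 0 ≤ ε) (h : 5 * ε ≤ e + 2 * p) :
    -(p ^ 2 + v) - ε * e + (-p + ε * (1 + e)) ^ 2 + v + ε ^ 2 ≤ 0 := by
  have hweight : (1 + e) ^ 2 + 1 ≤ 5 := by nlinarith
  calc -(p ^ 2 + v) - ε * e + (-p + ε * (1 + e)) ^ 2 + v + ε ^ 2
      = ε * (ε * ((1 + e) ^ 2 + 1) - e - 2 * p - 2 * (p * e)) := by ring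
    _ ≤ ε * (ε * 5 - e - 2 * p - 0) := by gcongr; positivity
    _ ≤ 0 := mul_nonpos_of_nonneg_of_nonpos hε (by linarith)

theorem exists_pos_forall_le_exp_add {p : ℝ → ℝ} {a κ : ℝ} (hκ : 0 < κ)
    (hp0 : ∀ t ∈ Ici a, 0 ≤ p t) (hpκ : ∀ᶠ t in atTop, κ ≤ p t) :
    ∃ δ > 0, ∀ t ∈ Ici a, δ ≤ Real.exp (a - t) + p t := by
  obtain ⟨T, hT⟩ := eventually_atTop.1 hpκ
  refine ⟨min (Real.exp (a - T)) κ, lt_min (Real.exp_pos _) hκ, fun t ht => ?_⟩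
  rcases le_total t T with htT | hTt
  · calc min (Real.exp (a - T)) κ ≤ Real.exp (a - T) := min_le_left _ _
      _ ≤ Real.exp (a - t) := by gcongr
      _ ≤ Real.exp (a - t) + p t := le_add_of_nonneg_right (hp0 t ht)
  · calc min (Real.exp (a - T)) κ ≤ κ := min_le_right _ _
      _ ≤ p t := hT t hTt
      _ ≤ Real.exp (a - t) + p t := le_add_of_nonneg_left (Real.exp_pos _).le

theorem exists_spectral_gap_of_riccati {V p : ℝ → ℝ} {a c : ℝ} (hc : 0 < c)
    (hV : ContinuousOn V (Ici a)) (hVc : ∀ᶠ t in atTop, V t ≤ -c)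
    (hp : ContinuousOn p (Ici a)) (hp0 : ∀ t ∈ Ici a, 0 ≤ p t)
    (hderiv : ∀ t ∈ Ioi a, HasDerivAt p (p t ^ 2 + V t) t) :
    ∃ lam > (0 : ℝ), ∀ q : ℝ → ℝ, ContDiff ℝ 1 q → HasCompactSupport q → q a = 0 →
      lam * ∫ t in Ioi a, q t ^ 2 ≤ ∫ t in Ioi a, (deriv q t ^ 2 - V t * q t ^ 2) := by
  have hpc : ∀ᶠ t in atTop, √c ≤ p t := by
    obtain ⟨T, hT⟩ := eventually_atTop.1 (hVc.and (eventually_gt_atTop a))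
    filter_upwards [eventually_ge_atTop T]
    exact sqrt_le_of_hasDerivAt_le_sq_sub (fun t ht => hderiv t (hT t ht).2)
      (fun t ht => by linarith [(hT t ht).1]) fun t ht => hp0 t (hT t ht).2.le
  obtain ⟨δ, hδ, hδp⟩ := exists_pos_forall_le_exp_add (Real.sqrt_pos.2 hc) hp0 hpc
  set ε := δ / 5 with hε
  refine ⟨ε ^ 2, by positivity, fun q => mul_integral_sq_le_of_riccati
    (ψ := fun t => -p t + ε * (1 + Real.exp (a - t)))
    (ψ' := fun t => -(p t ^ 2 + V t) - ε * Real.exp (a - t)) hV (by fun_prop) (by fun_prop)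
    (fun t ht => ?_) fun t ht => ?_⟩
  · have hexp : HasDerivAt (fun t => Real.exp (a - t)) (-Real.exp (a - t)) t := by
      simpa using ((hasDerivAt_id t).const_sub a).exp
    exact ((hderiv t ht).neg.add ((hexp.const_add 1).const_mul ε)).congr_deriv (by ring)
  · have hat : a ≤ t := le_of_lt ht
    exact riccati_perturbation_nonpos (hp0 t hat) (Real.exp_pos _).le
      (Real.exp_le_one_iff.2 (sub_nonpos.2 hat)) (by positivity)
      (by linarith [hδp t hat, hp0 t hat])

theorem hasDerivAt_comp_div_riccati {f w u : ℝ → ℝ} {t : ℝ} (hf : DifferentiableAt ℝ f (w t))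
    (hw : HasDerivAt w (u t) t) (hu : HasDerivAt u (-f (w t)) t) (hut : u t ≠ 0) :
    HasDerivAt (fun t => f (w t) / u t) ((f (w t) / u t) ^ 2 + deriv f (w t)) t := by
  refine ((hf.hasDerivAt.comp t hw).div hu hut).congr_deriv ?_
  simp only [Function.comp_apply]
  field_simp
  ring

theorem spectral_gap_general {f w : ℝ → ℝ} {a L : ℝ} (hf : ContDiff ℝ 1 f)
    (hf0 : ∀ s ∈ Ico (w a) L, 0 ≤ f s) (hfL : deriv f L < 0) (hw : ContDiffOn ℝ 2 w (Ici a))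
    (hode : ∀ t ∈ Ioi a, derivWithin (derivWithin w (Ici a)) (Ici a) t + f (w t) = 0)
    (hlim : Tendsto w atTop (nhds L)) (hw' : ∀ t ∈ Ici a, 0 < derivWithin w (Ici a) t) :
    ∃ lam > (0 : ℝ), ∀ q : ℝ → ℝ, ContDiff ℝ 1 q → HasCompactSupport q → q a = 0 →
      lam * ∫ t in Ioi a, q t ^ 2 ≤ ∫ t in Ioi a, (deriv q t ^ 2 - deriv f (w t) * q t ^ 2) := by
  have hu : ContDiffOn ℝ 1 (derivWithin w (Ici a)) (Ici a) :=
    hw.derivWithin (uniqueDiffOn_Ici a) (by norm_num)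
  have hf'c : Continuous (deriv f) := hf.continuous_deriv le_rfl
  have hmono : StrictMonoOn w (Ici a) :=
    strictMonoOn_Ici_of_derivWithin_pos hw.continuousOn fun t ht => hw' t (Ioi_subset_Ici_self ht)
  have hfw : ∀ t ∈ Ici a, 0 ≤ f (w t) := fun t ht =>
    hf0 _ ⟨hmono.monotoneOn self_mem_Ici ht ht, lt_of_strictMonoOn_Ici_of_tendsto hmono hlim ht⟩
  have hV : ∀ᶠ t in atTop, deriv f (w t) ≤ -(-deriv f L / 2) :=
    (((hf'c.tendsto L).comp hlim).eventually_lt_const (by linarith)).mono fun _ => le_of_lt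
  refine exists_spectral_gap_of_riccati (p := fun t => f (w t) / derivWithin w (Ici a) t)
    (by linarith) (hf'c.comp_continuousOn hw.continuousOn) hV
    ((hf.continuous.comp_continuousOn hw.continuousOn).div hu.continuousOn
      fun t ht => (hw' t ht).ne')
    (fun t ht => div_nonneg (hfw t ht) (hw' t ht).le) fun t ht => ?_
  refine hasDerivAt_comp_div_riccati (hf.differentiable one_ne_zero _)
    (hasDerivAt_derivWithin_Ici (hw.differentiableOn two_ne_zero) ht) ?_
    (hw' t (Ioi_subset_Ici_self ht)).ne'
  rw [← eq_neg_of_add_eq_zero_left (hode t ht)]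
  exact hasDerivAt_derivWithin_Ici (hu.differentiableOn one_ne_zero) ht

/-- Spectral gap: there exists `a > 0` such that for all `C¹` functions
`q` with compact support and `q(0) = 0`,
`a ∫₀^∞ q² ≤ ∫₀^∞ (q'² - f'(w) q²)`. -/
theorem spectral_gap (f w : ℝ → ℝ) (hf : Monostable f) (hw : IsHeteroclinic f w) :
    ∃ a > (0 : ℝ), ∀ q : ℝ → ℝ, ContDiff ℝ 1 q → HasCompactSupport q → q 0 = 0 →
      a * ∫ t in Set.Ioi (0 : ℝ), (q t) ^ 2 ≤
        ∫ t in Set.Ioi (0 : ℝ), ((deriv q t) ^ 2 - deriv f (w t) * (q t) ^ 2) := by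
  obtain ⟨hfs, hf0, -, hfpos, hf1⟩ := hf
  obtain ⟨hwC, hode, hw0, hlim, -, -, hw'⟩ := hw
  refine spectral_gap_general (hfs.of_le (by exact_mod_cast le_top)) (fun s hs => ?_) hf1 hwC hode
    hlim hw'
  rcases (hw0 ▸ hs.1).eq_or_lt with rfl | hs0
  exacts [hf0.ge, (hfpos s ⟨hs0, hs.2⟩).le]
end
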